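/- Let S be a finite nonempty index set and, on a common probability space, let (W_s)_{s ∈ S} be real random variables such that each W_s has a chi-squared distribution with p_s degrees of freedom (p_s a positive integer), with no independence assumption among the W_s. Then for every δ with 0 < δ < 1, E[max_{s ∈ S} (W_s − p_s)] ≤ (2/(1−δ))·log( Σ_{s ∈ S} (δ·e^{1−δ})^{−p_s/2} ). -/

import Mathlib

open MeasureTheory ProbabilityTheory NNReal

/-!
Put `t = (1 - δ) / 2`, so that `1 - 2 t = δ`. The moment generating function of the chi-squared law
gives `E[exp (t (W_s - p_s))] = (δ e^{1-δ})^{-p_s/2}`, hence with `M = max_s (W_s - p_s)`,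
`E[exp (t M)] ≤ E[∑ s, exp (t (W_s - p_s))] = A`, where `A = ∑ s, (δ e^{1-δ})^{-p_s/2}`.
Jensen's inequality `t E[M] ≤ log E[exp (t M)] ≤ log A` then finishes the proof. Jensen is applied
in the form of the tangent-line bound `x ≤ log A + exp x / A - 1`, integrated at `x = t M`.
The moment generating function of a Gamma law (`lintegral_exp_mul_gammaMeasure`) is computed by
exponential tilting: `exp (t x)` times the density with rate `r` is a constant times the density
with rate `r - t`.
-/

lemma exp_mul_gammaPDFReal {a r t : ℝ} (hr : 0 < r) (ht : t < r) (x : ℝ) :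
    Real.exp (t * x) * gammaPDFReal a r x
      = (r / (r - t)) ^ a * gammaPDFReal a (r - t) x := by
  have hrt : 0 < r - t := sub_pos.2 ht
  unfold gammaPDFReal
  split_ifs with hx
  · have hexp : Real.exp (-((r - t) * x)) = Real.exp (t * x) * Real.exp (-(r * x)) := by
      rw [← Real.exp_add]
      ring_nf
    have hpos : (r - t) ^ a ≠ 0 := (Real.rpow_pos_of_pos hrt a).ne'
    rw [Real.div_rpow hr.le hrt.le, hexp]
    field_simp
  · simp

/-- The moment generating function of the Gamma law, for `t` below the rate (negative `t`
included). Stated as a lower Lebesgue integral, so that it also yields integrability. -/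
lemma lintegral_exp_mul_gammaMeasure {a r t : ℝ} (ha : 0 < a) (hr : 0 < r) (ht : t < r) :
    ∫⁻ x, ENNReal.ofReal (Real.exp (t * x)) ∂(gammaMeasure a r)
      = ENNReal.ofReal ((r / (r - t)) ^ a) := by
  have hrt : 0 < r - t := sub_pos.2 ht
  have hmeas (r' : ℝ) : Measurable (gammaPDF a r') :=
    (measurable_gammaPDFReal a r').ennreal_ofReal
  have hpt (x : ℝ) : gammaPDF a r x * ENNReal.ofReal (Real.exp (t * x))
      = ENNReal.ofReal ((r / (r - t)) ^ a) * gammaPDF a (r - t) x := by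
    unfold gammaPDF
    rw [mul_comm, ← ENNReal.ofReal_mul (Real.exp_pos _).le, exp_mul_gammaPDFReal hr ht,
      ENNReal.ofReal_mul (by positivity)]
  rw [gammaMeasure, lintegral_withDensity_eq_lintegral_mul _ (hmeas r) (by fun_prop)]
  simp only [Pi.mul_apply, hpt]
  rw [lintegral_const_mul _ (hmeas _), lintegral_gammaPDF_eq_one ha hrt, mul_one]

section GammaVariable

variable {Ω : Type*} [MeasurableSpace Ω] {P : Measure Ω} {X : Ω → ℝ} {a r t : ℝ}

lemma lintegral_exp_mul_of_map_eq_gamma (hX : Measurable X)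
    (hlaw : Measure.map X P = gammaMeasure a r) (ha : 0 < a) (hr : 0 < r) (ht : t < r) :
    ∫⁻ ω, ENNReal.ofReal (Real.exp (t * X ω)) ∂P = ENNReal.ofReal ((r / (r - t)) ^ a) := by
  rw [← lintegral_exp_mul_gammaMeasure ha hr ht, ← hlaw, lintegral_map (by fun_prop) hX]

lemma integrable_exp_mul_of_map_eq_gamma (hX : Measurable X)
    (hlaw : Measure.map X P = gammaMeasure a r) (ha : 0 < a) (hr : 0 < r) (ht : t < r) :
    Integrable (fun ω => Real.exp (t * X ω)) P := by
  refine ⟨by fun_prop, ?_⟩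
  rw [hasFiniteIntegral_iff_ofReal (.of_forall fun ω => (Real.exp_pos _).le),
    lintegral_exp_mul_of_map_eq_gamma hX hlaw ha hr ht]
  exact ENNReal.ofReal_lt_top

lemma integral_exp_mul_of_map_eq_gamma (hX : Measurable X)
    (hlaw : Measure.map X P = gammaMeasure a r) (ha : 0 < a) (hr : 0 < r) (ht : t < r) :
    ∫ ω, Real.exp (t * X ω) ∂P = (r / (r - t)) ^ a := by
  have hrt : 0 < r - t := sub_pos.2 ht
  rw [integral_eq_lintegral_of_nonneg_ae (.of_forall fun ω => (Real.exp_pos _).le)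
    (by fun_prop), lintegral_exp_mul_of_map_eq_gamma hX hlaw ha hr ht,
    ENNReal.toReal_ofReal (by positivity)]

lemma integrable_of_map_eq_gamma (hX : Measurable X)
    (hlaw : Measure.map X P = gammaMeasure a r) (ha : 0 < a) (hr : 0 < r) :
    Integrable X P := by
  have h := integrable_pow_of_integrable_exp_mul (μ := P) (X := X) (t := r / 2)
    (by positivity)
    (integrable_exp_mul_of_map_eq_gamma hX hlaw ha hr (by linarith))
    (integrable_exp_mul_of_map_eq_gamma hX hlaw ha hr (by linarith)) 1
  simpa using h

end GammaVariable

lemma integrable_iSup_of_fintype {Ω S : Type*} [MeasurableSpace Ω] {P : Measure Ω}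
    [Fintype S] [Nonempty S] {f : S → Ω → ℝ} (hm : ∀ s, Measurable (f s))
    (hf : ∀ s, Integrable (f s) P) : Integrable (fun ω => ⨆ s, f s ω) P := by
  refine Integrable.mono' (integrable_finsetSum Finset.univ fun s _ => (hf s).abs)
    (Measurable.iSup hm).aestronglyMeasurable (.of_forall fun ω => ?_)
  obtain ⟨s, hs⟩ := exists_eq_ciSup_of_finite (f := fun s => f s ω)
  rw [← hs, Real.norm_eq_abs]
  exact Finset.single_le_sum (f := fun s => |f s ω|) (fun i _ => abs_nonneg _)
    (Finset.mem_univ s)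

/-- The tangent line of the logarithm at `A`, evaluated at `exp x`. -/
lemma le_log_add_exp_div_sub_one {A : ℝ} (hA : 0 < A) (x : ℝ) :
    x ≤ Real.log A + Real.exp x / A - 1 := by
  have h := Real.add_one_le_exp (x - Real.log A)
  rw [Real.exp_sub, Real.exp_log hA] at h
  linarith

/-- The chi-squared moment generating function at `t = (1 - δ) / 2`, after centring. -/
lemma exp_neg_mul_rpow_eq {δ : ℝ} (hδ : 0 < δ) (q : ℝ) :
    Real.exp (-((1 - δ) / 2 * q)) * ((1 / 2) / (1 / 2 - (1 - δ) / 2)) ^ (q / 2)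
      = (δ * Real.exp (1 - δ)) ^ (-q / 2) := by
  have h1 : (1 / 2 : ℝ) / (1 / 2 - (1 - δ) / 2) = δ⁻¹ := by
    have : (1 / 2 : ℝ) - (1 - δ) / 2 = δ / 2 := by ring
    rw [this]
    field_simp
  rw [h1, Real.inv_rpow hδ.le, ← Real.rpow_neg hδ.le,
    Real.mul_rpow hδ.le (Real.exp_pos _).le, ← Real.exp_mul, mul_comm]
  ring_nf

/-- Maximal inequality for (possibly dependent) chi-squared random
variables: if each `W_s` is chi-squared with `p_s ≥ 1` degrees of freedom (i.e. its law
is `Gamma(p_s/2, 1/2)`), then for every `0 < δ < 1`,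
`E[max_{s ∈ S} (W_s − p_s)] ≤ (2/(1−δ))·log(Σ_{s ∈ S} (δ·e^{1−δ})^{−p_s/2})`. -/
theorem chi_squared_max_bound
    {Ω : Type*} [MeasurableSpace Ω] (P : Measure Ω) [IsProbabilityMeasure P]
    {S : Type*} [Fintype S] [Nonempty S]
    (p : S → ℕ) (hp : ∀ s, 1 ≤ p s)
    (W : S → Ω → ℝ) (hW : ∀ s, Measurable (W s))
    (hWdist : ∀ s, Measure.map (W s) P = gammaMeasure ((p s : ℝ) / 2) (1 / 2)) :
    ∀ δ : ℝ, 0 < δ → δ < 1 →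
      ∫ ω, (⨆ s : S, (W s ω - (p s : ℝ))) ∂P
        ≤ 2 / (1 - δ) *
            Real.log (∑ s : S, (δ * Real.exp (1 - δ)) ^ (-(p s : ℝ) / 2)) := by
  intro δ hδ0 hδ1
  set A : ℝ := ∑ s : S, (δ * Real.exp (1 - δ)) ^ (-(p s : ℝ) / 2) with hA
  have hApos : 0 < A := Finset.sum_pos (fun s _ => by positivity) Finset.univ_nonempty
  set t : ℝ := (1 - δ) / 2 with ht
  have ht0 : 0 < t := by rw [ht]; linarith
  have ht2 : t < 1 / 2 := by rw [ht]; linarith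
  have ha (s : S) : 0 < (p s : ℝ) / 2 := by
    have : (0 : ℝ) < p s := by exact_mod_cast hp s
    positivity
  set M : Ω → ℝ := fun ω => ⨆ s : S, (W s ω - (p s : ℝ)) with hM
  have hsplit (s : S) (ω : Ω) : Real.exp (t * (W s ω - p s))
      = Real.exp (-(t * p s)) * Real.exp (t * W s ω) := by
    rw [← Real.exp_add]
    ring_nf
  have hexpInt (s : S) : Integrable (fun ω => Real.exp (t * (W s ω - p s))) P := by
    simp only [hsplit]
    exact (integrable_exp_mul_of_map_eq_gamma (hW s) (hWdist s) (ha s) (by norm_num)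
      ht2).const_mul _
  have hsumInt : Integrable (fun ω => ∑ s, Real.exp (t * (W s ω - p s))) P :=
    integrable_finsetSum _ fun s _ => hexpInt s
  have hsum : ∫ ω, ∑ s, Real.exp (t * (W s ω - p s)) ∂P = A := by
    rw [integral_finsetSum _ fun s _ => hexpInt s, hA]
    refine Finset.sum_congr rfl fun s _ => ?_
    simp only [hsplit]
    rw [integral_const_mul, integral_exp_mul_of_map_eq_gamma (hW s) (hWdist s) (ha s)
      (by norm_num) ht2]
    exact exp_neg_mul_rpow_eq hδ0 _
  have hMint : Integrable M P :=
    integrable_iSup_of_fintype (fun s => (hW s).sub_const _) fun s =>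
      (integrable_of_map_eq_gamma (hW s) (hWdist s) (ha s) (by norm_num)).sub
        (integrable_const _)
  have hbound (ω : Ω) :
      t * M ω ≤ Real.log A + (∑ s, Real.exp (t * (W s ω - p s))) / A - 1 := by
    obtain ⟨s, hs⟩ := exists_eq_ciSup_of_finite (f := fun s => W s ω - (p s : ℝ))
    have hle : Real.exp (t * M ω) ≤ ∑ s, Real.exp (t * (W s ω - p s)) := by
      simp only [hM]
      rw [← hs]
      exact Finset.single_le_sum (f := fun s => Real.exp (t * (W s ω - p s)))
        (fun i _ => (Real.exp_pos _).le) (Finset.mem_univ s)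
    have h := le_log_add_exp_div_sub_one hApos (t * M ω)
    have h' := div_le_div_of_nonneg_right hle hApos.le
    linarith
  have hmain : t * ∫ ω, M ω ∂P ≤ Real.log A := by
    have hconst : Integrable (fun _ : Ω => Real.log A) P := integrable_const _
    have hdiv := hsumInt.div_const A
    have hadd : Integrable
        (fun ω => Real.log A + (∑ s, Real.exp (t * (W s ω - p s))) / A) P := hconst.add hdiv
    calc t * ∫ ω, M ω ∂P = ∫ ω, t * M ω ∂P := (integral_const_mul _ _).symm
      _ ≤ ∫ ω, (Real.log A + (∑ s, Real.exp (t * (W s ω - p s))) / A - 1) ∂P :=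
          integral_mono (hMint.const_mul t) (hadd.sub (integrable_const 1)) hbound
      _ = Real.log A := by
          rw [integral_sub hadd (integrable_const 1),
            integral_add hconst hdiv, integral_div, hsum, div_self hApos.ne']
          simp
  have hfac : 2 / (1 - δ) = t⁻¹ := by rw [ht, inv_div]
  rw [hfac, inv_mul_eq_div, le_div_iff₀ ht0, mul_comm]
  exact hmain
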